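/- arXiv:2306.10374 — 4 statements merged into one kernel-verified Lean document; each statement's English description precedes it below -/
import Mathlib

section
/- For all ŷ, y ∈ ℝ^d and any choice of hindsight optimal action z*(y), the SPO+ loss upper bounds the SPO loss: ℓ_SPO(ŷ, y) ≤ ℓ_SPO+(ŷ, y). -/
open scoped RealInnerProductSpace

/-- The SPO loss: worst-case cost over the set of minimizers of the predicted objective,
minus the optimal hindsight value. -/
noncomputable def lossSPO {d : ℕ} (Z : Set (EuclideanSpace ℝ (Fin d)))
    (yhat y : EuclideanSpace ℝ (Fin d)) : ℝ :=
  sSup ((fun z => ⟪y, z⟫) '' {z ∈ Z | ∀ w ∈ Z, ⟪yhat, z⟫ ≤ ⟪yhat, w⟫}) -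
    sInf ((fun z => ⟪y, z⟫) '' Z)

/-- The SPO+ loss with hindsight optimal action `zstar`. -/
noncomputable def lossSPOplus {d : ℕ} (Z : Set (EuclideanSpace ℝ (Fin d)))
    (yhat y zstar : EuclideanSpace ℝ (Fin d)) : ℝ :=
  sSup ((fun z => ⟪y - (2 : ℝ) • yhat, z⟫) '' Z) + 2 * ⟪yhat, zstar⟫ - ⟪y, zstar⟫

/-- The SPO+ loss upper bounds the SPO loss. -/
theorem stmt4 {d : ℕ} (Z : Set (EuclideanSpace ℝ (Fin d)))
    (hne : Z.Nonempty) (hcomp : IsCompact Z)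
    (y yhat zstar : EuclideanSpace ℝ (Fin d))
    (hzstar : zstar ∈ Z) (hmin : ∀ w ∈ Z, ⟪y, zstar⟫ ≤ ⟪y, w⟫) :
    lossSPO Z yhat y ≤ lossSPOplus Z yhat y zstar := by
  have hInf : sInf ((fun z => ⟪y, z⟫) '' Z) = ⟪y, zstar⟫ :=
    IsLeast.csInf_eq ⟨⟨zstar, hzstar, rfl⟩, by rintro _ ⟨w, hw, rfl⟩; exact hmin w hw⟩
  have hbdd : BddAbove ((fun z => ⟪y - (2 : ℝ) • yhat, z⟫) '' Z) :=
    hcomp.bddAbove_image (by fun_prop)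
  obtain ⟨zhat, hzhat, hzhat_min⟩ :=
    hcomp.exists_isMinOn hne (f := fun z => ⟪yhat, z⟫) (by fun_prop)
  have hSup : sSup ((fun z => ⟪y, z⟫) '' {z ∈ Z | ∀ w ∈ Z, ⟪yhat, z⟫ ≤ ⟪yhat, w⟫}) ≤
      sSup ((fun z => ⟪y - (2 : ℝ) • yhat, z⟫) '' Z) + 2 * ⟪yhat, zstar⟫ := by
    refine csSup_le (Set.Nonempty.image _ ⟨zhat, hzhat, fun w hw => hzhat_min hw⟩) ?_
    rintro _ ⟨z, ⟨hz, hz_min⟩, rfl⟩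
    have hle := le_csSup hbdd (Set.mem_image_of_mem _ hz)
    simp only [inner_sub_left, real_inner_smul_left] at hle ⊢
    linarith [hz_min zstar hzstar]
  unfold lossSPO lossSPOplus
  linarith
end

section
/- Fix y, ŷ ∈ ℝ^d and let z̃ ∈ argmin_{z ∈ Z} ⟨2ŷ − y, z⟩ (equivalently, z̃ achieves max_{z ∈ Z} ⟨y − 2ŷ, z⟩). Then 2(z*(y) − z̃) is a subgradient of ℓ_SPO+(·, y) at ŷ: for every u ∈ ℝ^d, ℓ_SPO+(u, y) ≥ ℓ_SPO+(ŷ, y) + ⟨2(z*(y) − z̃), u − ŷ⟩. -/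
open scoped RealInnerProductSpace

/-- If `ztilde` minimizes `⟪2ŷ - y, ·⟫` over `Z`, then `2(z*(y) - ztilde)` is a subgradient
of the SPO+ loss `ℓ_SPO+(·, y)` at `ŷ`. -/
theorem stmt6 {d : ℕ} (Z : Set (EuclideanSpace ℝ (Fin d)))
    (hne : Z.Nonempty) (hcomp : IsCompact Z)
    (y yhat zstar ztilde : EuclideanSpace ℝ (Fin d))
    (hzstar : zstar ∈ Z) (hmin : ∀ w ∈ Z, ⟪y, zstar⟫ ≤ ⟪y, w⟫)
    (hzt : ztilde ∈ Z)
    (hztmin : ∀ w ∈ Z, ⟪(2 : ℝ) • yhat - y, ztilde⟫ ≤ ⟪(2 : ℝ) • yhat - y, w⟫) :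
    ∀ u : EuclideanSpace ℝ (Fin d),
      lossSPOplus Z yhat y zstar + ⟪(2 : ℝ) • (zstar - ztilde), u - yhat⟫ ≤
        lossSPOplus Z u y zstar := by
  intro u
  have hsup_yhat : sSup ((fun z => ⟪y - (2 : ℝ) • yhat, z⟫) '' Z) ≤
      ⟪y - (2 : ℝ) • yhat, ztilde⟫ := by
    refine csSup_le (hne.image _) ?_
    rintro _ ⟨w, hw, rfl⟩
    have h := hztmin w hw
    simp only [inner_sub_left] at h ⊢
    linarith
  have hsup_u : ⟪y - (2 : ℝ) • u, ztilde⟫ ≤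
      sSup ((fun z => ⟪y - (2 : ℝ) • u, z⟫) '' Z) :=
    le_csSup (hcomp.bddAbove_image (by fun_prop)) (Set.mem_image_of_mem _ hzt)
  unfold lossSPOplus
  have hlin : ⟪(2 : ℝ) • (zstar - ztilde), u - yhat⟫ =
      2 * (⟪u, zstar⟫ - ⟪yhat, zstar⟫ - ⟪u, ztilde⟫ + ⟪yhat, ztilde⟫) := by
    rw [real_inner_comm]
    simp only [inner_sub_left, inner_sub_right, real_inner_smul_right]
    ring
  have hexp (v : EuclideanSpace ℝ (Fin d)) :
      ⟪y - (2 : ℝ) • v, ztilde⟫ = ⟪y, ztilde⟫ - 2 * ⟪v, ztilde⟫ := by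
    rw [inner_sub_left, real_inner_smul_left]
  rw [hexp] at hsup_yhat hsup_u
  linarith
end

section
/- Let P denote the orthogonal projection of H onto the finite-dimensional subspace S := span{k_1, …, k_N}. Then for every φ ∈ H, F(P φ) ≤ F(φ), with strict inequality whenever φ ∉ S. Consequently, every minimizer φ* of F over H lies in span{k_1, …, k_N}, i.e., φ* = Σ_{i=1}^N a_i k_i for some a ∈ ℝ^N (representer theorem for regularized empirical risk minimization). -/
open scoped RealInnerProductSpace

/-- Representer theorem for regularized empirical risk minimization: if `P` is the
orthogonal projection onto `S := span{k_1, …, k_N}`, then `F (P φ) ≤ F φ` for every `φ`,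
with strict inequality whenever `φ ∉ S`; consequently every minimizer of `F` lies in `S`. -/
theorem stmt9 {H : Type*} [NormedAddCommGroup H] [InnerProductSpace ℝ H]
    {N : ℕ} (k : Fin N → H) (G : (Fin N → ℝ) → ℝ) (lam : ℝ) (hlam : 0 < lam)
    (F : H → ℝ)
    (hF : ∀ φ : H, F φ = G (fun i => ⟪φ, k i⟫) + lam * ‖φ‖ ^ 2)
    (P : H → H)
    (hP : ∀ φ : H, P φ ∈ Submodule.span ℝ (Set.range k) ∧
        φ - P φ ∈ (Submodule.span ℝ (Set.range k))ᗮ) :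
    (∀ φ : H, F (P φ) ≤ F φ ∧
        (φ ∉ Submodule.span ℝ (Set.range k) → F (P φ) < F φ)) ∧
    (∀ φstar : H, (∀ φ : H, F φstar ≤ F φ) →
        φstar ∈ Submodule.span ℝ (Set.range k)) := by
  have decomp (φ : H) : F φ = F (P φ) + lam * ‖φ - P φ‖ ^ 2 := by
    obtain ⟨hmem, hperp⟩ := hP φ
    have heval : (fun i => ⟪φ, k i⟫) = fun i => ⟪P φ, k i⟫ := by
      funext i
      have h := Submodule.inner_left_of_mem_orthogonal
        (Submodule.subset_span (Set.mem_range_self i)) hperp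
      rw [inner_sub_left] at h
      exact sub_eq_zero.mp h
    have hnorm : ‖φ‖ ^ 2 = ‖P φ‖ ^ 2 + ‖φ - P φ‖ ^ 2 := by
      have h := norm_add_sq_real (P φ) (φ - P φ)
      rw [add_sub_cancel, Submodule.inner_right_of_mem_orthogonal hmem hperp] at h
      linarith
    rw [hF, hF, heval, hnorm]
    ring
  have strict (φ : H) (hφ : φ ∉ Submodule.span ℝ (Set.range k)) : F (P φ) < F φ := by
    have hne : φ - P φ ≠ 0 := fun h => hφ (sub_eq_zero.mp h ▸ (hP φ).1)
    rw [decomp φ]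
    exact lt_add_of_pos_right _ (by positivity)
  refine ⟨fun φ => ⟨?_, strict φ⟩, fun φstar hmin => ?_⟩
  · rw [decomp φ]
    exact le_add_of_nonneg_right (by positivity)
  · by_contra hφ
    exact (strict φstar hφ).not_ge (hmin _)
end

section
/- Assume the covariates x_1, …, x_N are pairwise distinct. Then the worst-case empirical regret over all policies consistent with the predictions equals the empirical average of the SPO loss: sup { (1/N) Σ_{i=1}^N ( ⟨y_i, π(x_i)⟩ − v(y_i) ) : π : X → Z with π(x) ∈ argmin_{z ∈ Z} ⟨g(x), z⟩ for all x ∈ X } = (1/N) Σ_{i=1}^N ℓ_SPO(g(x_i), y_i), and this supremum is attained. -/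
open scoped RealInnerProductSpace

/-- The minimizers over a compact set of a linear functional form a compact set. -/
lemma isCompact_minimizers {E : Type*} [NormedAddCommGroup E] [InnerProductSpace ℝ E]
    {Z : Set E} (hZ : IsCompact Z) (c : E) :
    IsCompact {z ∈ Z | ∀ w ∈ Z, ⟪c, z⟫ ≤ ⟪c, w⟫} := by
  refine hZ.inter_right (t := {z | ∀ w ∈ Z, ⟪c, z⟫ ≤ ⟪c, w⟫}) ?_
  simp only [Set.ofPred_forall]
  exact isClosed_biInter fun w _ => isClosed_le (by fun_prop) continuous_const

/-- A linear functional attains its minimum over a nonempty compact set. -/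
lemma nonempty_minimizers {E : Type*} [NormedAddCommGroup E] [InnerProductSpace ℝ E]
    {Z : Set E} (hZ : IsCompact Z) (hne : Z.Nonempty) (c : E) :
    {z ∈ Z | ∀ w ∈ Z, ⟪c, z⟫ ≤ ⟪c, w⟫}.Nonempty := by
  obtain ⟨z, hz, hmin⟩ := hZ.exists_isMinOn hne
    (f := fun z => ⟪c, z⟫) (by fun_prop)
  exact ⟨z, hz, fun w hw => hmin hw⟩

/-- Among the minimizers of one linear functional, the supremum of another is attained. -/
lemma isGreatest_sSup_inner_minimizers {E : Type*} [NormedAddCommGroup E] [InnerProductSpace ℝ E]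
    {Z : Set E} (hZ : IsCompact Z) (hne : Z.Nonempty) (c y : E) :
    IsGreatest ((fun z => ⟪y, z⟫) '' {z ∈ Z | ∀ w ∈ Z, ⟪c, z⟫ ≤ ⟪c, w⟫})
      (sSup ((fun z => ⟪y, z⟫) '' {z ∈ Z | ∀ w ∈ Z, ⟪c, z⟫ ≤ ⟪c, w⟫})) :=
  ((isCompact_minimizers hZ c).image (by fun_prop)).isGreatest_sSup
    ((nonempty_minimizers hZ hne c).image _)

/-- If the covariates are pairwise distinct, the worst-case empirical regret over all
policies consistent with the predictions equals the empirical average of the SPO loss,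
and this supremum is attained. -/
theorem stmt13 {X : Type*} {d N : ℕ} (Z : Set (EuclideanSpace ℝ (Fin d)))
    (hne : Z.Nonempty) (hcomp : IsCompact Z)
    (x : Fin N → X) (y : Fin N → EuclideanSpace ℝ (Fin d))
    (hx : Function.Injective x)
    (g : X → EuclideanSpace ℝ (Fin d)) :
    IsGreatest
      {r : ℝ | ∃ π : X → EuclideanSpace ℝ (Fin d),
        (∀ a : X, π a ∈ Z ∧ ∀ w ∈ Z, ⟪g a, π a⟫ ≤ ⟪g a, w⟫) ∧
        r = (N : ℝ)⁻¹ * ∑ i, (⟪y i, π (x i)⟫ - sInf ((fun z => ⟪y i, z⟫) '' Z))}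
      ((N : ℝ)⁻¹ * ∑ i, lossSPO Z (g (x i)) (y i)) := by
  have hsup (i : Fin N) := isGreatest_sSup_inner_minimizers hcomp hne (g (x i)) (y i)
  constructor
  · choose worst hworst_mem hworst_eq using fun i => (hsup i).1
    choose dflt hdflt using fun a => nonempty_minimizers hcomp hne (g a)
    refine ⟨Function.extend x worst dflt, fun a => ?_, ?_⟩
    · by_cases ha : ∃ i, x i = a
      · obtain ⟨i, rfl⟩ := ha
        rw [hx.extend_apply]
        exact hworst_mem i
      · rw [Function.extend_apply' _ _ _ ha]
        exact hdflt a
    · congr 1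
      refine Finset.sum_congr rfl fun i _ => ?_
      rw [hx.extend_apply, lossSPO, ← hworst_eq i]
  · rintro r ⟨π, hπ, rfl⟩
    unfold lossSPO
    gcongr with i
    exact (hsup i).2 ⟨π (x i), hπ (x i), rfl⟩
end
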